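/- (Zlotnik inequality) Let T > 0 and suppose y ∈ W^{1,1}(0,T) solves the ODE y′(t) = g(y(t)) + b′(t) for a.e. t ∈ [0,T] with y(0) = y₀, where b ∈ W^{1,1}(0,T) and g ∈ C(ℝ) with lim_{ξ→+∞} g(ξ) = −∞. Assume there are positive constants N₀ and N₁ such that b(t₂) − b(t₁) ≤ N₀ + N₁(t₂ − t₁) for all 0 ≤ t₁ ≤ t₂ ≤ T, and let ξ* ∈ ℝ be a constant such that g(ξ) ≤ −N₁ for all ξ ≥ ξ*. Then y(t) ≤ max{y₀, ξ*} + N₀ < +∞ for all t ∈ [0,T]. -/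

import Mathlib

open MeasureTheory Filter Set
open scoped ENNReal NNReal

/-- **Lemma 2.2, Zlotnik inequality.**
Suppose `y ∈ W^{1,1}(0,T)` solves `y′ = g(y) + b′` a.e. on `[0,T]` with
`b ∈ W^{1,1}(0,T)`, `g` continuous with `g(+∞) = −∞`.  If
`b(t₂) − b(t₁) ≤ N₀ + N₁(t₂ − t₁)` for all `0 ≤ t₁ ≤ t₂ ≤ T` with `N₀, N₁ > 0`, and
`ξ* ∈ ℝ` satisfies `g(ξ) ≤ −N₁` for all `ξ ≥ ξ*`, then
`y(t) ≤ max{y₀, ξ*} + N₀ < +∞` on `[0,T]`.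
(`W^{1,1}` functions are encoded as indefinite integrals of their integrable
derivatives `yd`, `bd`.) -/
theorem stmt3 (T : ℝ) (hT : 0 < T) (y b yd bd : ℝ → ℝ) (g : ℝ → ℝ) (N0 N1 ξs : ℝ)
    (hg : Continuous g) (hgtop : Tendsto g atTop atBot)
    (hyd : IntegrableOn yd (Icc 0 T)) (hbd : IntegrableOn bd (Icc 0 T))
    (hy : ∀ t ∈ Icc (0:ℝ) T, y t = y 0 + ∫ s in (0:ℝ)..t, yd s)
    (hb : ∀ t ∈ Icc (0:ℝ) T, b t = b 0 + ∫ s in (0:ℝ)..t, bd s)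
    (hode : ∀ᵐ t ∂(volume.restrict (Icc (0:ℝ) T)), yd t = g (y t) + bd t)
    (hN0 : 0 < N0) (hN1 : 0 < N1)
    (hbb : ∀ t1 t2 : ℝ, 0 ≤ t1 → t1 ≤ t2 → t2 ≤ T → b t2 - b t1 ≤ N0 + N1 * (t2 - t1))
    (hxi : ∀ ξ : ℝ, ξs ≤ ξ → g ξ ≤ -N1) :
    ∀ t ∈ Icc (0:ℝ) T, y t ≤ max (y 0) ξs + N0 := by
  intro t ht
  set M := max (y 0) ξs with hM
  have iyd : ∀ a c : ℝ, 0 ≤ a → a ≤ c → c ≤ T → IntervalIntegrable yd volume a c := by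
    intro a c ha hac hc
    rw [intervalIntegrable_iff_integrableOn_Icc_of_le hac]
    exact hyd.mono_set (Icc_subset_Icc ha hc)
  have ibd : ∀ a c : ℝ, 0 ≤ a → a ≤ c → c ≤ T → IntervalIntegrable bd volume a c := by
    intro a c ha hac hc
    rw [intervalIntegrable_iff_integrableOn_Icc_of_le hac]
    exact hbd.mono_set (Icc_subset_Icc ha hc)
  have hyc : ContinuousOn y (Icc 0 T) := by
    have h1 : ContinuousOn (fun x => ∫ s in (0:ℝ)..x, yd s) (Icc 0 T) := by
      have := intervalIntegral.continuousOn_primitive_interval (a := 0) (b := T) (f := yd)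
        (μ := volume) (by rwa [uIcc_of_le hT.le])
      rwa [uIcc_of_le hT.le] at this
    exact (continuousOn_const.add h1).congr hy
  have hyct : ContinuousOn y (Icc 0 t) := hyc.mono (Icc_subset_Icc le_rfl ht.2)
  have hcl : IsClosed (Icc 0 t ∩ y ⁻¹' Iic M) := hyct.preimage_isClosed_of_isClosed isClosed_Icc isClosed_Iic
  have hcomp : IsCompact (Icc 0 t ∩ y ⁻¹' Iic M) :=
    isCompact_Icc.of_isClosed_subset hcl inter_subset_left
  have hne : (Icc 0 t ∩ y ⁻¹' Iic M).Nonempty :=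
    ⟨0, ⟨le_rfl, ht.1⟩, le_max_left (y 0) ξs⟩
  obtain ⟨s, ⟨⟨⟨hs0, hst⟩, hsM⟩, hmax⟩⟩ := hcomp.exists_isGreatest hne
  have hsM' : y s ≤ M := hsM
  have hsT : s ≤ T := hst.trans ht.2
  have ey : y t - y s = ∫ r in s..t, yd r := by
    rw [hy t ht, hy s ⟨hs0, hsT⟩, ← intervalIntegral.integral_add_adjacent_intervals
      (iyd 0 s le_rfl hs0 hsT) (iyd s t hs0 hst ht.2)]
    ring
  have eb : b t - b s = ∫ r in s..t, bd r := by
    rw [hb t ht, hb s ⟨hs0, hsT⟩, ← intervalIntegral.integral_add_adjacent_intervals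
      (ibd 0 s le_rfl hs0 hsT) (ibd s t hs0 hst ht.2)]
    ring
  have hle : ∫ r in s..t, yd r ≤ ∫ r in s..t, (bd r - N1) := by
    rw [intervalIntegral.integral_of_le hst, intervalIntegral.integral_of_le hst]
    refine setIntegral_mono_on_ae (iyd s t hs0 hst ht.2).1
      ((ibd s t hs0 hst ht.2).sub intervalIntegrable_const).1 measurableSet_Ioc ?_
    have h := (ae_restrict_iff' measurableSet_Icc).1 hode
    filter_upwards [h] with r hr hrm
    rw [hr ⟨hs0.trans hrm.1.le, hrm.2.trans ht.2⟩]
    have hgt : M < y r := by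
      by_contra hc
      have := hmax ⟨⟨hs0.trans hrm.1.le, hrm.2⟩, not_lt.1 hc⟩
      exact absurd hrm.1 (not_lt.2 this)
    have := hxi (y r) ((le_max_right _ _).trans hgt.le)
    linarith
  rw [intervalIntegral.integral_sub (ibd s t hs0 hst ht.2) intervalIntegrable_const,
    intervalIntegral.integral_const, smul_eq_mul] at hle
  have := hbb s t hs0 hst ht.2
  nlinarith
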